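/- arXiv:math/0108144 — 4 statements merged into one kernel-verified Lean document; each statement's English description precedes it below -/
import Mathlib

section
/- Coordinate form of the key step of Proposition 4 (for n ≥ 2): the intersection M ∩ R equals the additive subgroup of R generated by the elements ∂ᵢ(f)·∂ⱼ(h) − ∂ⱼ(f)·∂ᵢ(h) for h ∈ R and 1 ≤ i < j ≤ n. In particular, if q₁,…,qₙ ∈ A are such that w := Σ_{i=1}^n (∂ᵢ(f)·qᵢ − s·∂ᵢ(qᵢ)) involves no variable s (i.e. w ∈ R ⊆ A), then w lies in that additive subgroup. -/
noncomputable section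

open scoped Pointwise

/-- The formal partial derivative `∂ᵢ` with respect to the `i`th variable, determined by
`coeff α (∂ᵢ g) = (α i + 1) • coeff (α + eᵢ) g`. -/
def pd {σ : Type*} (i : σ) (g : MvPowerSeries σ ℂ) : MvPowerSeries σ ℂ :=
  fun α => ((α i : ℂ) + 1) * MvPowerSeries.coeff (α + Finsupp.single i 1) g

lemma coeff_pd {σ : Type*} (i : σ) (g : MvPowerSeries σ ℂ) (α : σ →₀ ℕ) :
    MvPowerSeries.coeff α (pd i g) =
      ((α i : ℂ) + 1) * MvPowerSeries.coeff (α + Finsupp.single i 1) g := rfl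

variable (n : ℕ)

/-- `R = ℂ[[x₁,…,xₙ]]`. -/
abbrev R' := MvPowerSeries (Fin n) ℂ

/-- `A = ℂ[[s,x₁,…,xₙ]]`, where `s` is the 0th variable and `xᵢ` is the variable
of index `i` (`1 ≤ i ≤ n`). -/
abbrev A' := MvPowerSeries (Fin (n + 1)) ℂ

/-- The variable `s` of `A`. -/
def sv : A' n := MvPowerSeries.X 0

/-- Forget the `s`-exponent of a multi-index of `A`. -/
def tailF (β : Fin (n + 1) →₀ ℕ) : Fin n →₀ ℕ :=
  Finsupp.equivFunOnFinite.symm fun i => β i.succ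

/-- The inclusion `R ⊆ A` as the subring of series not involving `s`. -/
def inclR (g : R' n) : A' n :=
  fun β => if β 0 = 0 then MvPowerSeries.coeff (tailF n β) g else 0

/-- The inclusion `ℂ[[s]] ⊆ A` as the subring of series in `s` alone. -/
def toA (p : PowerSeries ℂ) : A' n :=
  fun β => if tailF n β = 0 then PowerSeries.coeff (β 0) p else 0

lemma coeff_inclR (g : R' n) (β : Fin (n + 1) →₀ ℕ) :
    MvPowerSeries.coeff β (inclR n g) =
      if β 0 = 0 then MvPowerSeries.coeff (tailF n β) g else 0 := rfl

/-- The `ℂ[[s]]`-linear operator `Fᵢ(g) = ∂ᵢ(f)·g − s·∂ᵢ(g)` on `A`. -/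
def FF (f : R' n) (i : Fin n) (g : A' n) : A' n :=
  inclR n (pd i f) * g - sv n * pd i.succ g

/-- `M = range F₁ + ⋯ + range Fₙ`, so that `H = A/M` is the formal Brieskorn lattice. -/
def Mset (f : R' n) : Set (A' n) :=
  {a | ∃ q : Fin n → A' n, a = ∑ i, FF n f i (q i)}

/-- The Jacobian ideal `J(f) = ⟨∂₁f,…,∂ₙf⟩` of `R`. -/
def Jf (f : R' n) : Ideal (R' n) :=
  Ideal.span (Set.range fun i : Fin n => pd i f)

/-- The maximal ideal `⟨x₁,…,xₙ⟩` of `R = ℂ[[x₁,…,xₙ]]`. -/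
def mx : Ideal (R' n) :=
  Ideal.span (Set.range (MvPowerSeries.X : Fin n → R' n))

/-- The ideal `J(f)·A` of `A` generated by `∂₁(f),…,∂ₙ(f)`. -/
def JA (f : R' n) : Ideal (A' n) :=
  Ideal.span (Set.range fun i : Fin n => inclR n (pd i f))

/-- The ideal `⟨x₁,…,xₙ⟩·A` of `A` generated by the variables `x₁,…,xₙ` (not `s`). -/
def XA : Ideal (A' n) :=
  Ideal.span (Set.range fun i : Fin n => (MvPowerSeries.X i.succ : A' n))

lemma pd_add {σ : Type*} (i : σ) (a b : MvPowerSeries σ ℂ) :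
    pd i (a + b) = pd i a + pd i b := by
  ext α; simp [coeff_pd, mul_add]

lemma pd_smul {σ : Type*} (i : σ) (c : ℂ) (a : MvPowerSeries σ ℂ) :
    pd i (c • a) = c • pd i a := by
  ext α; simp [coeff_pd]; ring

lemma FF_add (f : R' n) (i : Fin n) (a b : A' n) :
    FF n f i (a + b) = FF n f i a + FF n f i b := by
  simp only [FF, pd_add, mul_add]; ring

lemma FF_smul (f : R' n) (i : Fin n) (c : ℂ) (a : A' n) :
    FF n f i (c • a) = c • FF n f i a := by
  simp only [FF, pd_smul, Algebra.mul_smul_comm, smul_sub]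

lemma FF_zero (f : R' n) (i : Fin n) : FF n f i 0 = 0 := by
  simpa using FF_smul n f i 0 0

/-- `M` as a `ℂ`-submodule of `A`. -/
def Msub (f : R' n) : Submodule ℂ (A' n) where
  carrier := Mset n f
  zero_mem' := ⟨0, by simp [FF_zero]⟩
  add_mem' := by
    rintro a b ⟨q, rfl⟩ ⟨q', rfl⟩
    exact ⟨q + q', by simp [FF_add, Finset.sum_add_distrib]⟩
  smul_mem' := by
    rintro c a ⟨q, rfl⟩
    exact ⟨c • q, by simp [FF_smul, Finset.smul_sum]⟩

/-- The inclusion `R ⊆ A` as a `ℂ`-linear map. -/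
def inclL : R' n →ₗ[ℂ] A' n where
  toFun := inclR n
  map_add' a b := by
    ext β; simp only [coeff_inclR, map_add]; split <;> simp
  map_smul' c a := by
    ext β; simp only [coeff_inclR, map_smul, RingHom.id_apply]; split <;> simp

section BrieskornProof

open MvPowerSeries

lemma pd_eq_pderiv {σ : Type*} (i : σ) (g : MvPowerSeries σ ℂ) :
    pd i g = MvPowerSeries.pderiv ℂ i g := by
  ext α
  rw [coeff_pd, MvPowerSeries.coeff_pderiv, mul_comm]

lemma pd_mul {σ : Type*} (i : σ) (a b : MvPowerSeries σ ℂ) :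
    pd i (a * b) = a * pd i b + b * pd i a := by
  simp only [pd_eq_pderiv, Derivation.leibniz, smul_eq_mul]

lemma pd_sum {σ ι : Type*} (i : σ) (t : Finset ι) (g : ι → MvPowerSeries σ ℂ) :
    pd i (∑ k ∈ t, g k) = ∑ k ∈ t, pd i (g k) := by
  simp only [pd_eq_pderiv, map_sum]

lemma pd_sub {σ : Type*} (i : σ) (a b : MvPowerSeries σ ℂ) :
    pd i (a - b) = pd i a - pd i b := by
  simp only [pd_eq_pderiv, map_sub]

lemma pd_neg {σ : Type*} (i : σ) (a : MvPowerSeries σ ℂ) :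
    pd i (-a) = - pd i a := by
  simp only [pd_eq_pderiv, map_neg]

lemma pd_comm {σ : Type*} (i j : σ) (g : MvPowerSeries σ ℂ) :
    pd i (pd j g) = pd j (pd i g) := by
  classical
  ext α
  simp only [coeff_pd, Finsupp.add_apply, Finsupp.single_apply]
  rw [add_right_comm α]
  by_cases h : i = j
  · subst h; ring
  · simp [h, Ne.symm h]; ring

lemma pd_X_self {σ : Type*} (i : σ) : pd i (X i : MvPowerSeries σ ℂ) = 1 := by
  rw [pd_eq_pderiv]; simp

lemma pd_X_ne {σ : Type*} {i j : σ} (h : j ≠ i) : pd i (X j : MvPowerSeries σ ℂ) = 0 := by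
  classical
  rw [pd_eq_pderiv]; simp [h]

lemma coeff_pd_X_mul {σ : Type*} (i : σ) (g : MvPowerSeries σ ℂ) (α : σ →₀ ℕ) :
    coeff α (pd i (X i * g)) = ((α i : ℂ) + 1) * coeff α g := by
  rw [coeff_pd, add_comm α, X_def, coeff_add_monomial_mul, one_mul]

/-- Divide the coefficient at `α` by `|α| + c`. -/
def Lsc {σ : Type*} (c : ℂ) (g : MvPowerSeries σ ℂ) : MvPowerSeries σ ℂ :=
  fun α => coeff α g / ((α.degree : ℂ) + c)

lemma coeff_Lsc {σ : Type*} (c : ℂ) (g : MvPowerSeries σ ℂ) (α : σ →₀ ℕ) :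
    coeff α (Lsc c g) = coeff α g / ((α.degree : ℂ) + c) := rfl

lemma Lsc_sub {σ : Type*} (c : ℂ) (a b : MvPowerSeries σ ℂ) :
    Lsc c (a - b) = Lsc c a - Lsc c b := by
  ext α; simp [coeff_Lsc, sub_div]

lemma Lsc_sum {σ ι : Type*} (c : ℂ) (t : Finset ι) (g : ι → MvPowerSeries σ ℂ) :
    Lsc c (∑ k ∈ t, g k) = ∑ k ∈ t, Lsc c (g k) := by
  ext α; simp [coeff_Lsc, Finset.sum_div]

lemma Lsc_pd {σ : Type*} (c : ℂ) (i : σ) (g : MvPowerSeries σ ℂ) :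
    Lsc (c + 1) (pd i g) = pd i (Lsc c g) := by
  ext α
  simp only [coeff_Lsc, coeff_pd, map_add, Finsupp.degree_single, Nat.cast_add, Nat.cast_one]
  rw [mul_div_assoc]
  congr 2
  ring

/-- Order at least `N`. -/
def SOrd {σ : Type*} (N : ℕ) (g : MvPowerSeries σ ℂ) : Prop :=
  ∀ α : σ →₀ ℕ, α.degree < N → coeff α g = 0

lemma SOrd.add {σ : Type*} {N : ℕ} {a b : MvPowerSeries σ ℂ} (ha : SOrd N a) (hb : SOrd N b) :
    SOrd N (a + b) := fun α h => by rw [map_add, ha α h, hb α h, add_zero]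

lemma SOrd.sub {σ : Type*} {N : ℕ} {a b : MvPowerSeries σ ℂ} (ha : SOrd N a) (hb : SOrd N b) :
    SOrd N (a - b) := fun α h => by rw [map_sub, ha α h, hb α h, sub_zero]

lemma SOrd.mono {σ : Type*} {N N' : ℕ} {a : MvPowerSeries σ ℂ} (ha : SOrd N a) (h : N' ≤ N) :
    SOrd N' a := fun α hα => ha α (hα.trans_le h)

lemma SOrd.sum {σ ι : Type*} {N : ℕ} (t : Finset ι) {g : ι → MvPowerSeries σ ℂ}
    (h : ∀ k, SOrd N (g k)) : SOrd N (∑ k ∈ t, g k) := fun α hα => by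
  rw [map_sum]; exact Finset.sum_eq_zero fun k _ => h k α hα

lemma SOrd.mul_left {σ : Type*} {N : ℕ} (b : MvPowerSeries σ ℂ) {a : MvPowerSeries σ ℂ}
    (ha : SOrd N a) : SOrd N (b * a) := fun α hα => by
  classical
  rw [coeff_mul]
  refine Finset.sum_eq_zero fun p hp => ?_
  rw [Finset.HasAntidiagonal.mem_antidiagonal] at hp
  rw [ha p.2, mul_zero]
  rw [← hp, map_add] at hα
  omega

lemma SOrd.X_mul {σ : Type*} {N : ℕ} (i : σ) {a : MvPowerSeries σ ℂ}
    (ha : SOrd N a) : SOrd (N + 1) (X i * a) := fun α hα => by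
  classical
  rw [X_def, coeff_monomial_mul]
  split_ifs with h
  · rw [ha, mul_zero]
    have h2 : Finsupp.degree (α - Finsupp.single i 1 + Finsupp.single i 1) = α.degree := by
      rw [tsub_add_cancel_of_le h]
    rw [map_add, Finsupp.degree_single] at h2
    omega
  · rfl

lemma SOrd.scale {σ : Type*} {N : ℕ} (c : ℂ) {a : MvPowerSeries σ ℂ}
    (ha : SOrd N a) : SOrd N (Lsc c a) := fun α hα => by
  rw [coeff_Lsc, ha α hα, zero_div]

lemma eq_zero_of_ord {σ : Type*} {a : MvPowerSeries σ ℂ} (h : ∀ N, SOrd N a) : a = 0 := by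
  ext α; exact h (α.degree + 1) α (Nat.lt_succ_self _)

/-- Infinite triangular systems can be solved when `T` raises the order. -/
lemma exists_system {σ ι : Type*} (T : (ι → MvPowerSeries σ ℂ) → (ι → MvPowerSeries σ ℂ))
    (hsub : ∀ x y, T (x - y) = T x - T y)
    (hT : ∀ N x, (∀ i, SOrd N (x i)) → ∀ i, SOrd (N + 1) (T x i))
    (b : ℕ → ι → MvPowerSeries σ ℂ) :
    ∃ η : ℕ → ι → MvPowerSeries σ ℂ, ∀ k, η k = b k + T (η (k + 1)) := by
  let ap : ℕ → ℕ → ι → MvPowerSeries σ ℂ := fun N =>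
    Nat.rec (fun _ => 0) (fun _ e k => b k + T (e (k + 1))) N
  have ap_succ : ∀ N k, ap (N + 1) k = b k + T (ap N (k + 1)) := fun N k => rfl
  have step : ∀ N k i, SOrd N (ap (N + 1) k i - ap N k i) := by
    intro N
    induction N with
    | zero => intro k i α hα; omega
    | succ N ih =>
      intro k i
      have : ap (N + 1 + 1) k i - ap (N + 1) k i
          = T (ap (N + 1) (k + 1) - ap N (k + 1)) i := by
        rw [ap_succ (N + 1), ap_succ N k, hsub]; simp
      rw [this]
      exact hT N _ (fun i => ih (k + 1) i) i
  have steps : ∀ N d k i, SOrd N (ap (N + d) k i - ap N k i) := by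
    intro N d k i
    induction d with
    | zero => intro α _; simp
    | succ d ih =>
      have := ((step (N + d) k i).mono (Nat.le_add_right N d)).add ih
      rwa [sub_add_sub_cancel] at this
  let η : ℕ → ι → MvPowerSeries σ ℂ := fun k i α => coeff α (ap (α.degree + 1) k i)
  have hη : ∀ N k i, SOrd N (η k i - ap N k i) := by
    intro N k i α hα
    obtain ⟨d, rfl⟩ := Nat.exists_eq_add_of_le (Nat.succ_le_of_lt hα)
    have h1 := steps (α.degree + 1) d k i α (Nat.lt_succ_self _)
    rw [map_sub] at h1 ⊢
    have h2 : coeff α (η k i) = coeff α (ap (α.degree + 1) k i) := rfl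
    rw [h2, ← neg_sub, neg_eq_zero]
    exact h1
  refine ⟨η, fun k => funext fun i => ?_⟩
  rw [← sub_eq_zero]
  refine eq_zero_of_ord fun N => ?_
  have e : η k i - (b k + T (η (k + 1))) i
      = (η k i - ap (N + 1) k i) - T (η (k + 1) - ap N (k + 1)) i := by
    rw [ap_succ, hsub]; simp only [Pi.add_apply, Pi.sub_apply]; ring
  rw [e]
  exact ((hη (N + 1) k i).sub (hT N _ (fun i => hη N (k + 1) i) i)).mono (Nat.le_succ N)

variable {n}

/-- Divergence of a vector. -/
def dv1 (q : Fin n → R' n) : R' n := ∑ i, pd i (q i)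

/-- Contraction of a vector. -/
def io1 (F : Fin n → R' n) (q : Fin n → R' n) : R' n := ∑ i, F i * q i

/-- Divergence of a bivector. -/
def dv2 (h : Fin n × Fin n → R' n) : Fin n → R' n := fun i => ∑ j, pd j (h (i, j))

/-- Contraction of a bivector. -/
def io2 (F : Fin n → R' n) (h : Fin n × Fin n → R' n) : Fin n → R' n :=
  fun i => ∑ j, F j * h (i, j)

/-- Homotopy on functions. -/
def K0 (u : R' n) : Fin n → R' n := fun i => X i * Lsc (n : ℂ) u

/-- Homotopy on vectors. -/
def K1 (q : Fin n → R' n) : Fin n × Fin n → R' n := fun p =>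
  X p.2 * Lsc ((n : ℂ) - 1) (q p.1) - X p.1 * Lsc ((n : ℂ) - 1) (q p.2)

lemma sum_pd_X_mul (g : R' n) (α : Fin n →₀ ℕ) :
    coeff α (∑ j, pd j (X j * g)) = ((α.degree : ℂ) + n) * coeff α g := by
  rw [map_sum]
  simp only [coeff_pd_X_mul]
  rw [← Finset.sum_mul, Finset.sum_add_distrib, Finsupp.degree_eq_sum]
  simp

lemma homotopy (hn : 2 ≤ n) (q : Fin n → R' n) : dv2 (K1 q) + K0 (dv1 q) = q := by
  funext i
  have h1 : dv2 (K1 q) i = (∑ j, pd j (X j * Lsc ((n : ℂ) - 1) (q i)))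
      - Lsc ((n : ℂ) - 1) (q i) - X i * ∑ j, pd j (Lsc ((n : ℂ) - 1) (q j)) := by
    simp only [dv2, K1, pd_sub, Finset.sum_sub_distrib]
    rw [sub_sub]
    congr 1
    rw [Finset.mul_sum]
    have : ∀ j, pd j (X i * Lsc ((n : ℂ) - 1) (q j)) =
        (if j = i then Lsc ((n : ℂ) - 1) (q i) else 0)
          + X i * pd j (Lsc ((n : ℂ) - 1) (q j)) := by
      intro j
      rw [pd_mul]
      split_ifs with h
      · subst h; rw [pd_X_self]; ring
      · rw [pd_X_ne (Ne.symm h)]; ring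
    simp only [this, Finset.sum_add_distrib]
    simp
  have h2 : K0 (dv1 q) i = X i * ∑ j, pd j (Lsc ((n : ℂ) - 1) (q j)) := by
    simp only [K0, dv1, Lsc_sum]
    congr 1
    refine Finset.sum_congr rfl fun j _ => ?_
    rw [← Lsc_pd]; simp
  rw [Pi.add_apply, h1, h2, sub_add_cancel]
  ext α
  rw [map_sub, sum_pd_X_mul, coeff_Lsc]
  have : ((α.degree : ℂ) + ((n : ℂ) - 1)) ≠ 0 := by
    obtain ⟨k, rfl⟩ := Nat.exists_eq_add_of_le hn
    have : ((α.degree + 1 + k : ℕ) : ℂ) ≠ 0 := by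
      rw [Nat.cast_ne_zero]; omega
    intro h
    apply this
    push_cast at h ⊢
    linear_combination h
  field_simp
  ring

lemma K0_sub (u v : R' n) : K0 (u - v) = K0 u - K0 v := by
  funext i; simp [K0, Lsc_sub, mul_sub]

lemma K1_sub (u v : Fin n → R' n) : K1 (u - v) = K1 u - K1 v := by
  funext i; simp only [K1, Pi.sub_apply, Lsc_sub]; ring

lemma io1_sub (F u v : Fin n → R' n) : io1 F (u - v) = io1 F u - io1 F v := by
  simp [io1, mul_sub]

lemma io2_sub (F : Fin n → R' n) (u v : Fin n × Fin n → R' n) :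
    io2 F (u - v) = io2 F u - io2 F v := by
  funext i; simp [io2, mul_sub]

lemma dv2_add (u v : Fin n × Fin n → R' n) : dv2 (u + v) = dv2 u + dv2 v := by
  funext i; simp [dv2, pd_add, Finset.sum_add_distrib]

lemma K1_anti (q : Fin n → R' n) (i j : Fin n) : K1 q (i, j) = - K1 q (j, i) := by
  simp [K1]

/-- A double sum of an antisymmetric family vanishes. -/
lemma sum_anti (g : Fin n → Fin n → R' n) (hg : ∀ i j, g i j = - g j i) :
    ∑ i, ∑ j, g i j = 0 := by
  have h : ∑ i, ∑ j, g i j = - ∑ i, ∑ j, g i j := by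
    conv_lhs => rw [Finset.sum_comm]
    simp only [← Finset.sum_neg_distrib]
    exact Finset.sum_congr rfl fun i _ => Finset.sum_congr rfl fun j _ => hg j i
  ext α
  have h2 := congrArg (coeff α) h
  rw [map_neg] at h2
  rw [map_zero]
  exact self_eq_neg.mp h2

lemma io1_io2 (F : Fin n → R' n) (h : Fin n × Fin n → R' n)
    (ha : ∀ i j, h (i, j) = - h (j, i)) : io1 F (io2 F h) = 0 := by
  simp only [io1, io2, Finset.mul_sum]
  refine sum_anti _ fun i j => ?_
  rw [ha i j]; ring

lemma dv1_io2 (F : Fin n → R' n) (hF : ∀ i j, pd i (F j) = pd j (F i))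
    (h : Fin n × Fin n → R' n)
    (ha : ∀ i j, h (i, j) = - h (j, i)) : dv1 (io2 F h) = - io1 F (dv2 h) := by
  rw [eq_neg_iff_add_eq_zero]
  have e1 : dv1 (io2 F h) = (∑ i, ∑ j, F j * pd i (h (i, j)))
      + ∑ i, ∑ j, h (i, j) * pd i (F j) := by
    simp only [dv1, io2, pd_sum, pd_mul, Finset.sum_add_distrib]
  have e2 : ∑ i, ∑ j, h (i, j) * pd i (F j) = 0 := by
    refine sum_anti _ fun i j => ?_
    rw [ha i j, hF i j]; ring
  rw [e1, e2, add_zero, Finset.sum_comm]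
  simp only [io1, dv2, Finset.mul_sum, ← Finset.sum_add_distrib]
  refine Finset.sum_eq_zero fun i _ => Finset.sum_eq_zero fun j _ => ?_
  rw [ha i j, pd_neg]; ring

lemma K0_ord {N : ℕ} {u : R' n} (h : SOrd N u) (i : Fin n) : SOrd (N + 1) (K0 u i) :=
  (h.scale _).X_mul i

lemma K1_ord {N : ℕ} {u : Fin n → R' n} (h : ∀ i, SOrd N (u i)) (p : Fin n × Fin n) :
    SOrd (N + 1) (K1 u p) :=
  (((h _).scale _).X_mul _).sub (((h _).scale _).X_mul _)

/-- The main algebraic statement, on the level of coefficients of `s^k`. -/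
lemma main_system (hn : 2 ≤ n) (F : Fin n → R' n) (hF : ∀ i j, pd i (F j) = pd j (F i))
    (ω : ℕ → Fin n → R' n) (hω : ∀ k, io1 F (ω (k + 1)) = dv1 (ω k)) :
    ∃ h : Fin n × Fin n → R' n, (∀ i j, h (i, j) = - h (j, i)) ∧
      io1 F (ω 0) = io1 F (dv2 h) := by
  obtain ⟨η, hη⟩ := exists_system (fun h => K1 (io2 F h))
    (fun x y => by rw [io2_sub, K1_sub])
    (fun N x hx p => K1_ord (fun i => SOrd.sum _ fun j => (hx (i, j)).mul_left _) p)
    (fun k => K1 (ω k))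
  have anti : ∀ k i j, η k (i, j) = - η k (j, i) := by
    intro k i j
    rw [hη k, Pi.add_apply, Pi.add_apply, K1_anti, K1_anti (io2 F (η (k + 1)))]
    ring
  let ρ : ℕ → Fin n → R' n := fun k => ω k - (dv2 (η k) - io2 F (η (k + 1)))
  have ioρ : ∀ k, io1 F (ρ k) = io1 F (ω k) - io1 F (dv2 (η k)) := by
    intro k
    simp only [ρ, io1_sub, io1_io2 F _ (anti (k + 1)), sub_zero]
  have hρ : ∀ k, ρ k = K0 (io1 F (ρ (k + 1))) := by
    intro k
    rw [ioρ, K0_sub, hω]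
    have e1 := homotopy hn (ω k)
    have e2 := homotopy hn (io2 F (η (k + 1)))
    rw [dv1_io2 F hF _ (anti (k + 1))] at e2
    have e3 : K0 (-io1 F (dv2 (η (k + 1)))) = - K0 (io1 F (dv2 (η (k + 1)))) := by
      have := K0_sub (0 : R' n) (io1 F (dv2 (η (k + 1))))
      have z : K0 (0 : R' n) = 0 := by simpa using K0_sub (0 : R' n) 0
      rwa [zero_sub, z, zero_sub] at this
    rw [e3] at e2
    have e4 : dv2 (η k) = dv2 (K1 (ω k)) + dv2 (K1 (io2 F (η (k + 1)))) := by
      conv_lhs => rw [hη k, dv2_add]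
    simp only [ρ]
    rw [e4]
    linear_combination - e2 - e1
  have ordρ : ∀ N k i, SOrd N (ρ k i) := by
    intro N
    induction N with
    | zero => intro k i α hα; omega
    | succ N ih =>
      intro k i
      rw [hρ k]
      exact K0_ord (SOrd.sum _ fun j => (ih (k + 1) j).mul_left _) i
  have ρ0 : ρ 0 = 0 := funext fun i => eq_zero_of_ord fun N => ordρ N 0 i
  refine ⟨η 0, anti 0, ?_⟩
  have := ioρ 0
  rw [ρ0] at this
  have z : io1 F (0 : Fin n → R' n) = 0 := by simp [io1]
  rw [z] at this
  exact (sub_eq_zero.mp this.symm)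

/-- Coefficient of `s^k`. -/
def sl (k : ℕ) (g : A' n) : R' n := fun α => coeff (Finsupp.cons k α) g

lemma coeff_sl (k : ℕ) (g : A' n) (α : Fin n →₀ ℕ) :
    coeff α (sl k g) = coeff (Finsupp.cons k α) g := rfl

lemma tailF_eq (β : Fin (n + 1) →₀ ℕ) : tailF n β = Finsupp.tail β := by
  ext i; simp [tailF, Finsupp.tail_apply]

lemma sl_ext {a b : A' n} (h : ∀ k, sl k a = sl k b) : a = b := by
  ext β
  have := congrArg (coeff (Finsupp.tail β)) (h (β 0))
  rwa [coeff_sl, coeff_sl, Finsupp.cons_tail] at this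

lemma sl_add (k : ℕ) (a b : A' n) : sl k (a + b) = sl k a + sl k b := by
  ext α; simp [coeff_sl]

lemma sl_sub (k : ℕ) (a b : A' n) : sl k (a - b) = sl k a - sl k b := by
  ext α; simp [coeff_sl]

lemma sl_sum {ι : Type*} (k : ℕ) (t : Finset ι) (g : ι → A' n) :
    sl k (∑ i ∈ t, g i) = ∑ i ∈ t, sl k (g i) := by
  ext α; simp [coeff_sl]

lemma sl_incl_zero (w : R' n) : sl 0 (inclR n w) = w := by
  ext α; simp [coeff_sl, coeff_inclR, tailF_eq]

lemma sl_incl_succ (k : ℕ) (w : R' n) : sl (k + 1) (inclR n w) = 0 := by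
  ext α; simp [coeff_sl, coeff_inclR]

lemma cons_add_cons (a b : ℕ) (α β : Fin n →₀ ℕ) :
    Finsupp.cons a α + Finsupp.cons b β = Finsupp.cons (a + b) (α + β) := by
  ext i
  refine Fin.cases ?_ (fun j => ?_) i <;> simp

lemma sl_pd (k : ℕ) (i : Fin n) (g : A' n) : sl k (pd i.succ g) = pd i (sl k g) := by
  ext α
  rw [coeff_sl, coeff_pd, coeff_pd, coeff_sl, ← Finsupp.cons_zero_single_eq_single_succ,
    cons_add_cons]
  simp

lemma sl_sv_zero (g : A' n) : sl 0 (sv n * g) = 0 := by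
  ext α
  rw [coeff_sl, sv, X_def, coeff_monomial_mul, if_neg]
  · simp
  · intro h
    have := h 0
    simp at this

lemma sl_sv_succ (k : ℕ) (g : A' n) : sl (k + 1) (sv n * g) = sl k g := by
  ext α
  rw [coeff_sl, coeff_sl, sv, X_def]
  have : (Finsupp.cons (k + 1) α : Fin (n + 1) →₀ ℕ)
      = Finsupp.single 0 1 + Finsupp.cons k α := by
    rw [← Finsupp.cons_zero_eq_single_zero, cons_add_cons, zero_add, add_comm 1 k]
  rw [this, coeff_add_monomial_mul, one_mul]

lemma sl_incl_mul (k : ℕ) (a : R' n) (g : A' n) : sl k (inclR n a * g) = a * sl k g := by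
  classical
  ext α
  rw [coeff_sl, coeff_mul, coeff_mul]
  symm
  refine Finset.sum_of_injOn
    (fun p => ((Finsupp.cons 0 p.1 : Fin (n + 1) →₀ ℕ), (Finsupp.cons k p.2 : Fin (n + 1) →₀ ℕ)))
    ?_ ?_ ?_ ?_
  · intro p _ p' _ h
    simp only [Prod.mk.injEq] at h
    exact Prod.ext (Finsupp.cons_right_injective _ h.1) (Finsupp.cons_right_injective _ h.2)
  · intro p hp
    simp only [Finset.mem_coe, Finset.HasAntidiagonal.mem_antidiagonal] at hp ⊢
    rw [cons_add_cons, hp, zero_add]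
  · intro p hp hnot
    rw [Finset.HasAntidiagonal.mem_antidiagonal] at hp
    rw [coeff_inclR]
    split_ifs with h0
    · exfalso
      apply hnot
      refine ⟨(Finsupp.tail p.1, Finsupp.tail p.2), ?_, ?_⟩
      · simp only [Finset.mem_coe, Finset.HasAntidiagonal.mem_antidiagonal]
        ext i
        have := DFunLike.congr_fun hp i.succ
        simpa [Finsupp.tail_apply] using this
      · have hk : p.2 0 = k := by
          have := DFunLike.congr_fun hp 0
          simpa [h0] using this
        refine Prod.ext ?_ ?_
        · simp only []
          rw [← h0, Finsupp.cons_tail]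
        · simp only []
          rw [← hk, Finsupp.cons_tail]
    · rw [zero_mul]
  · intro p _
    simp [coeff_inclR, tailF_eq, coeff_sl]

lemma inclR_mul (a b : R' n) : inclR n (a * b) = inclR n a * inclR n b := by
  refine sl_ext fun k => ?_
  rw [sl_incl_mul]
  cases k with
  | zero => rw [sl_incl_zero, sl_incl_zero]
  | succ k => rw [sl_incl_succ, sl_incl_succ, mul_zero]

lemma inclR_pd (i : Fin n) (a : R' n) : inclR n (pd i a) = pd i.succ (inclR n a) := by
  refine sl_ext fun k => ?_
  rw [sl_pd]
  cases k with
  | zero => rw [sl_incl_zero, sl_incl_zero]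
  | succ k =>
    rw [sl_incl_succ, sl_incl_succ]
    ext α; simp [coeff_pd]

/-- Elements of `M ∩ R` lie in the subgroup. -/
lemma mem_closure_of_eq (hn : 2 ≤ n) (f : R' n) (q : Fin n → A' n) (w : R' n)
    (hw : inclR n w = ∑ i, FF n f i (q i)) :
    w ∈ AddSubgroup.closure
        {w : R' n | ∃ (h : R' n) (i j : Fin n), i < j ∧
          w = pd i f * pd j h - pd j f * pd i h} := by
  have h0 : w = io1 (fun i => pd i f) (fun i => sl 0 (q i)) := by
    have := congrArg (sl 0) hw
    rw [sl_incl_zero, sl_sum] at this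
    simpa only [FF, sl_sub, sl_incl_mul, sl_sv_zero, sub_zero, io1] using this
  have hs : ∀ k, io1 (fun i => pd i f) (fun i => sl (k + 1) (q i))
      = dv1 (fun i => sl k (q i)) := by
    intro k
    have := congrArg (sl (k + 1)) hw
    rw [sl_incl_succ, sl_sum] at this
    simp only [FF, sl_sub, sl_incl_mul, sl_sv_succ, sl_pd, Finset.sum_sub_distrib] at this
    exact sub_eq_zero.mp this.symm
  obtain ⟨h, ha, hh⟩ := main_system hn (fun i => pd i f) (fun i j => pd_comm i j f)
    (fun k i => sl k (q i)) hs
  have gen : ∀ (g : R' n) (i j : Fin n), pd i f * pd j g - pd j f * pd i g ∈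
      AddSubgroup.closure
        {w : R' n | ∃ (h : R' n) (i j : Fin n), i < j ∧
          w = pd i f * pd j h - pd j f * pd i h} := by
    intro g i j
    rcases lt_trichotomy i j with hij | hij | hij
    · exact AddSubgroup.subset_closure ⟨g, i, j, hij, rfl⟩
    · subst hij; rw [sub_self]; exact AddSubgroup.zero_mem _
    · rw [← neg_sub]
      exact AddSubgroup.neg_mem _ (AddSubgroup.subset_closure ⟨g, j, i, hij, rfl⟩)
  have key : w = ∑ i, ∑ j, (pd i f * pd j ((1 / 2 : ℂ) • h (i, j))
      - pd j f * pd i ((1 / 2 : ℂ) • h (i, j))) := by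
    rw [h0, hh]
    simp only [Finset.sum_sub_distrib]
    rw [Finset.sum_comm (f := fun i j => pd j f * pd i ((1 / 2 : ℂ) • h (i, j)))]
    simp only [io1, dv2, Finset.mul_sum, ← Finset.sum_sub_distrib]
    refine Finset.sum_congr rfl fun i _ => Finset.sum_congr rfl fun j _ => ?_
    rw [ha j i, smul_neg, pd_neg, pd_smul, mul_neg, sub_neg_eq_add, ← mul_add, ← add_smul]
    norm_num
  rw [key]
  exact AddSubgroup.sum_mem _ fun i _ => AddSubgroup.sum_mem _ fun j _ => gen _ i j

/-- The generators lie in `M`. -/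
lemma gen_mem (f h : R' n) (i j : Fin n) (hij : i < j) :
    inclR n (pd i f * pd j h - pd j f * pd i h) ∈ Msub n f := by
  classical
  have single : ∀ (i : Fin n) (a : A' n), FF n f i a ∈ Msub n f := by
    intro i a
    refine ⟨Pi.single i a, ?_⟩
    rw [Finset.sum_eq_single i]
    · simp
    · intro b _ hb
      rw [Pi.single_eq_of_ne hb, FF_zero]
    · simp
  have e : inclR n (pd i f * pd j h - pd j f * pd i h)
      = FF n f i (inclR n (pd j h)) - FF n f j (inclR n (pd i h)) := by
    have : inclR n (pd i f * pd j h - pd j f * pd i h)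
        = inclR n (pd i f * pd j h) - inclR n (pd j f * pd i h) := map_sub (inclL n) _ _
    rw [this, inclR_mul, inclR_mul]
    simp only [FF, ← inclR_pd]
    rw [pd_comm j i]
    ring
  rw [e]
  exact Submodule.sub_mem _ (single _ _) (single _ _)

end BrieskornProof

/-- **Key step of Proposition 4 (coordinate form), `n ≥ 2`**: the intersection `M ∩ R`
equals the additive subgroup of `R` generated by the elements
`∂ᵢ(f)·∂ⱼ(h) − ∂ⱼ(f)·∂ᵢ(h)` for `h ∈ R` and `i < j`.  In particular, if
`w = Σᵢ (∂ᵢ(f)·qᵢ − s·∂ᵢ(qᵢ))` involves no variable `s`, then `w` lies in that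
additive subgroup. -/
theorem brieskorn_inter_R (n : ℕ) (hn : 2 ≤ n) (f : R' n)
    (hf0 : MvPowerSeries.constantCoeff f = 0)
    (m : ℕ) (hm : 1 ≤ m) (hiso : mx n ^ m ≤ Jf n f) :
    (∀ w : R' n, inclR n w ∈ Mset n f ↔
      w ∈ AddSubgroup.closure
        {w : R' n | ∃ (h : R' n) (i j : Fin n), i < j ∧
          w = pd i f * pd j h - pd j f * pd i h}) ∧
    (∀ (q : Fin n → A' n) (w : R' n), inclR n w = ∑ i, FF n f i (q i) →
      w ∈ AddSubgroup.closure
        {w : R' n | ∃ (h : R' n) (i j : Fin n), i < j ∧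
          w = pd i f * pd j h - pd j f * pd i h}) := by
  have key := fun (q : Fin n → A' n) (w : R' n) (hw : inclR n w = ∑ i, FF n f i (q i)) =>
    mem_closure_of_eq hn f q w hw
  refine ⟨fun w => ⟨fun ⟨q, hq⟩ => key q w hq, fun hw => ?_⟩, key⟩
  have hle : AddSubgroup.closure
        {w : R' n | ∃ (h : R' n) (i j : Fin n), i < j ∧
          w = pd i f * pd j h - pd j f * pd i h}
      ≤ ((Msub n f).comap (inclL n)).toAddSubgroup := by
    rw [AddSubgroup.closure_le]
    rintro _ ⟨h, i, j, hij, rfl⟩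
    exact gen_mem f h i j hij
  exact hle hw
end
end

section
/- Multiplication by s is injective on the formal Brieskorn lattice: for every p ∈ A, if s·p ∈ M then p ∈ M; equivalently, the ℂ[[s]]-linear endomorphism of H = A/M induced by multiplication with s is injective. -/
noncomputable section

open scoped Pointwise

variable (n : ℕ)

namespace BK
open ExteriorAlgebra

variable {S : Type*} [CommRing S] {n : ℕ}

/-- The functional `v ↦ ∑ gᵢ vᵢ`. -/
noncomputable def phi (g : Fin n → S) : Module.Dual S (Fin n → S) :=
  Fintype.linearCombination S g

lemma phi_apply (g v : Fin n → S) : phi g v = ∑ j, v j * g j := by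
  simp [phi, Fintype.linearCombination_apply]

/-- The Koszul differential on the exterior algebra. -/
noncomputable def dd (g : Fin n → S) :
    ExteriorAlgebra S (Fin n → S) →ₗ[S] ExteriorAlgebra S (Fin n → S) :=
  CliffordAlgebra.contractLeft (Q := (0 : QuadraticForm S (Fin n → S))) (phi g)

lemma dd_ι_mul (g v : Fin n → S) (x : ExteriorAlgebra S (Fin n → S)) :
    dd g (ι S v * x) = phi g v • x - ι S v * dd g x :=
  CliffordAlgebra.contractLeft_ι_mul (Q := (0 : QuadraticForm S (Fin n → S))) (phi g) v x

lemma dd_algebraMap (g : Fin n → S) (r : S) :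
    dd g (algebraMap S _ r) = 0 :=
  CliffordAlgebra.contractLeft_algebraMap (Q := (0 : QuadraticForm S (Fin n → S))) (phi g) r

lemma dd_ι (g v : Fin n → S) :
    dd g (ι S v) = algebraMap S _ (phi g v) :=
  CliffordAlgebra.contractLeft_ι (Q := (0 : QuadraticForm S (Fin n → S))) (phi g) v

lemma dd_dd (g : Fin n → S) (x : ExteriorAlgebra S (Fin n → S)) : dd g (dd g x) = 0 :=
  CliffordAlgebra.contractLeft_contractLeft (Q := (0 : QuadraticForm S (Fin n → S))) (phi g) x

lemma ι_mul_mem (v : Fin n → S) {i : ℕ} {x : ExteriorAlgebra S (Fin n → S)}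
    (hx : x ∈ ⋀[S]^i (Fin n → S)) : ι S v * x ∈ ⋀[S]^(i+1) (Fin n → S) := by
  unfold exteriorPower at *
  rw [pow_succ']
  exact Submodule.mul_mem_mul ⟨v, rfl⟩ hx

lemma dd_mem (g : Fin n → S) : ∀ (i : ℕ) (x : ExteriorAlgebra S (Fin n → S)),
    x ∈ ⋀[S]^(i+1) (Fin n → S) → dd g x ∈ ⋀[S]^i (Fin n → S) := by
  intro i
  induction i with
  | zero =>
    intro x hx
    have hx' : x ∈ LinearMap.range (ι S : (Fin n → S) →ₗ[S] _) := by
      simpa [exteriorPower] using hx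
    obtain ⟨v, rfl⟩ := hx'
    rw [dd_ι]
    simp [exteriorPower]
  | succ i ih =>
    intro x hx
    unfold exteriorPower at hx
    rw [pow_succ'] at hx
    induction hx using Submodule.mul_induction_on' with
    | mem_mul_mem a ha b hb =>
      obtain ⟨v, rfl⟩ := ha
      rw [dd_ι_mul]
      exact Submodule.sub_mem _ (Submodule.smul_mem _ _ hb) (ι_mul_mem v (ih b hb))
    | add a _ b _ h1 h2 => rw [map_add]; exact Submodule.add_mem _ h1 h2

lemma map_mem_smul {M N : Type*} [AddCommGroup M] [Module S M] [AddCommGroup N] [Module S N]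
    (I : Ideal S) (h : M →ₗ[S] N)
    (P : Submodule S M) (Q : Submodule S N) (hPQ : ∀ x ∈ P, h x ∈ Q) {x : M}
    (hx : x ∈ I • P) : h x ∈ I • Q := by
  have h1 : h x ∈ (I • P).map h := ⟨x, hx, rfl⟩
  rw [Submodule.map_smul''] at h1
  exact Submodule.smul_mono le_rfl (by rintro _ ⟨y, hy, rfl⟩; exact hPQ y hy) h1

lemma mem_smul_top_free {M : Type*} [AddCommGroup M] [Module S M] [Module.Free S M]
    [Module.Finite S M] (I : Ideal S) (x : M) :
    x ∈ I • (⊤ : Submodule S M) ↔ ∀ φ : Module.Dual S M, φ x ∈ I := by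
  constructor
  · intro hx φ
    have := map_mem_smul I φ ⊤ ⊤ (fun _ _ => trivial) hx
    simpa using this
  · intro h
    let b := Module.Free.chooseBasis S M
    rw [← b.sum_repr x]
    exact Submodule.sum_mem _ fun i _ => Submodule.smul_mem_smul (h (b.coord i)) trivial

lemma reg_power (I : Ideal S) (a : S) (hreg : ∀ w, a * w ∈ I → w ∈ I) (i : ℕ)
    (w : ExteriorAlgebra S (Fin n → S)) (hw : w ∈ ⋀[S]^i (Fin n → S))
    (h : a • w ∈ I • (⋀[S]^i (Fin n → S))) : w ∈ I • (⋀[S]^i (Fin n → S)) := by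
  rw [show w = ((⟨w, hw⟩ : ⋀[S]^i (Fin n → S)) : ExteriorAlgebra S (Fin n → S)) from rfl,
    ← Submodule.mem_smul_top_iff, mem_smul_top_free]
  rw [show a • w = ((a • ⟨w, hw⟩ : ⋀[S]^i (Fin n → S)) : ExteriorAlgebra S (Fin n → S)) from rfl,
    ← Submodule.mem_smul_top_iff, mem_smul_top_free] at h
  intro φ
  apply hreg
  rw [← smul_eq_mul, ← map_smul]
  exact h φ

lemma power_eq_zero [Nontrivial S] (i : ℕ) (hi : n < i) (w : ExteriorAlgebra S (Fin n → S))
    (hw : w ∈ ⋀[S]^i (Fin n → S)) : w = 0 := by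
  have h : Module.finrank S (⋀[S]^i (Fin n → S)) = 0 := by
    rw [exteriorPower.finrank_eq]; simp [Nat.choose_eq_zero_of_lt hi]
  have := Module.finrank_eq_zero_iff_of_free (R := S) (M := ⋀[S]^i (Fin n → S)) |>.1 h
  have h2 : (⟨w, hw⟩ : ⋀[S]^i (Fin n → S)) = 0 := Subsingleton.elim _ _
  exact congrArg Subtype.val h2

/-- Vanishing of Koszul homology (depth sensitivity). -/
lemma koszul_vanish [Nontrivial S] (g : Fin n → S) (I : ℕ → Ideal S) (a : ℕ → S)
    (hI : ∀ j < n, I (j+1) = I j ⊔ Ideal.span {a j})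
    (hreg : ∀ j < n, ∀ w, a j * w ∈ I j → w ∈ I j)
    (ha : ∀ j < n, a j ∈ Ideal.span (Set.range g)) (k : ℕ) :
    ∀ j, j + k = n → ∀ l, j ≤ l → ∀ u ∈ ⋀[S]^(l+1) (Fin n → S),
      dd g u ∈ I j • (⋀[S]^l (Fin n → S)) →
      ∃ z ∈ ⋀[S]^(l+2) (Fin n → S), u - dd g z ∈ I j • (⋀[S]^(l+1) (Fin n → S)) := by
  induction k with
  | zero =>
    intro j hj l hl u hu _
    refine ⟨0, Submodule.zero_mem _, ?_⟩
    rw [power_eq_zero (l+1) (by omega) u hu]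
    simp
  | succ k ih =>
    intro j hj l hl u hu hdu
    have hjn : j < n := by omega
    obtain ⟨v, hv⟩ : ∃ v : Fin n → S, phi g v = a j := by
      have := ha j hjn
      rw [Ideal.span, Submodule.mem_span_range_iff_exists_fun] at this
      obtain ⟨c, hc⟩ := this
      exact ⟨c, by rw [phi_apply, ← hc]; rfl⟩
    have hy := ι_mul_mem v hu
    have h1 : dd g (ι S v * u) = a j • u - ι S v * dd g u := by rw [dd_ι_mul, hv]
    have h2 : ι S v * dd g u ∈ I j • (⋀[S]^(l+1) (Fin n → S)) :=
      map_mem_smul (I j) (LinearMap.mulLeft S (ι S v)) _ _ (fun x hx => ι_mul_mem v hx) hdu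
    have hsup : ∀ i, I (j+1) • (⋀[S]^i (Fin n → S)) =
        I j • (⋀[S]^i (Fin n → S)) ⊔ Ideal.span {a j} • (⋀[S]^i (Fin n → S)) := by
      intro i; rw [hI j hjn, Submodule.sup_smul]
    have h3 : dd g (ι S v * u) ∈ I (j+1) • (⋀[S]^(l+1) (Fin n → S)) := by
      rw [h1, hsup]
      refine Submodule.sub_mem _ (Submodule.mem_sup_right ?_) (Submodule.mem_sup_left h2)
      exact Submodule.smul_mem_smul (Ideal.mem_span_singleton_self _) hu
    obtain ⟨z, hz, hz2⟩ := ih (j+1) (by omega) (l+1) (by omega) _ hy h3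
    rw [hsup, Submodule.mem_sup] at hz2
    obtain ⟨α, hα, t, ht, hat⟩ := hz2
    rw [Submodule.ideal_span_singleton_smul] at ht
    obtain ⟨w, hw, rfl⟩ := ht
    refine ⟨w, hw, reg_power (I j) (a j) (hreg j hjn) _ _
      (Submodule.sub_mem _ hu (dd_mem g _ _ hw)) ?_⟩
    have h4 : a j • (u - dd g w) = ι S v * dd g u + dd g α := by
      have := congrArg (dd g) hat
      simp only [map_add, map_sub, dd_dd, h1, DistribSMul.toLinearMap_apply, map_smul] at this
      rw [smul_sub]
      rw [sub_zero] at this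
      rw [eq_comm, sub_eq_iff_eq_add] at this
      rw [this]; abel
    rw [h4]
    exact Submodule.add_mem _ h2 (map_mem_smul (I j) (dd g) _ _ (fun x hx => dd_mem g _ x hx) hα)

lemma dd_two (g : Fin n → S) (z : ExteriorAlgebra S (Fin n → S))
    (hz : z ∈ ⋀[S]^2 (Fin n → S)) :
    ∃ a : Fin n → Fin n → S, (∀ i j, a i j = - a j i) ∧
      dd g z = ι S (fun i => ∑ j, a i j * g j) := by
  unfold exteriorPower at hz
  rw [pow_two] at hz
  induction hz using Submodule.mul_induction_on' with
  | mem_mul_mem x hx y hy =>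
    obtain ⟨v, rfl⟩ := hx
    obtain ⟨w, rfl⟩ := hy
    refine ⟨fun i j => v j * w i - w j * v i, fun i j => by ring, ?_⟩
    rw [dd_ι_mul, dd_ι, ← Algebra.commutes, ← Algebra.smul_def, ← map_smul, ← map_smul, ← map_sub]
    congr 1
    ext i
    simp only [Pi.sub_apply, Pi.smul_apply, smul_eq_mul, phi_apply, Finset.sum_mul]
    rw [← Finset.sum_sub_distrib]
    exact Finset.sum_congr rfl fun j _ => by ring
  | add x _ y _ h1 h2 =>
    obtain ⟨a, ha, ha'⟩ := h1
    obtain ⟨b, hb, hb'⟩ := h2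
    refine ⟨fun i j => a i j + b i j, fun i j => by
      change a i j + b i j = -(a j i + b j i)
      rw [ha i j, hb i j]; ring, ?_⟩
    rw [map_add, ha', hb', ← map_add]
    congr 1
    ext i
    simp [add_mul, Finset.sum_add_distrib]

lemma koszul_syzygy [Nontrivial S] (g : Fin n → S) (I : ℕ → Ideal S) (a : ℕ → S)
    (hI0 : I 0 = ⊥)
    (hI : ∀ j < n, I (j+1) = I j ⊔ Ideal.span {a j})
    (hreg : ∀ j < n, ∀ w, a j * w ∈ I j → w ∈ I j)
    (ha : ∀ j < n, a j ∈ Ideal.span (Set.range g))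
    (q : Fin n → S) (hq : ∑ j, q j * g j = 0) :
    ∃ a : Fin n → Fin n → S, (∀ i j, a i j = - a j i) ∧ ∀ i, q i = ∑ j, a i j * g j := by
  obtain ⟨z, hz, h⟩ := koszul_vanish g I a hI hreg ha n 0 (by simp) 0 le_rfl (ι S q)
    (by simp [exteriorPower]) (by rw [dd_ι, phi_apply, hq]; simp)
  rw [hI0, Submodule.bot_smul, Submodule.mem_bot, sub_eq_zero] at h
  obtain ⟨b, hb, hb'⟩ := dd_two g z hz
  refine ⟨b, hb, fun i => ?_⟩
  rw [hb'] at h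
  exact congrFun ((ExteriorAlgebra.ι_inj S _ _).1 h) i

end BK

namespace BK
open MvPowerSeries

lemma pd_eq {σ : Type*} (i : σ) (g : MvPowerSeries σ ℂ) : pd i g = pderiv ℂ i g := by
  ext α
  rw [coeff_pd, coeff_pderiv, mul_comm]

lemma coeff_cons {n : ℕ} (g : R' n) (α : Fin n →₀ ℕ) :
    coeff (Finsupp.cons 0 α) (inclR n g) = coeff α g := by
  rw [coeff_inclR, if_pos (Finsupp.cons_zero _ _)]
  congr 2
  ext i
  simp [tailF]

lemma tailF_eq {n : ℕ} (β : Fin (n+1) →₀ ℕ) (h : β 0 = 0) : β = Finsupp.cons 0 (tailF n β) := by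
  ext i
  refine Fin.cases ?_ (fun i => ?_) i
  · simp [h]
  · simp [tailF]

lemma inclR_eq {n : ℕ} (g : R' n) : inclR n g = rename (Fin.succEmb n) g := by
  ext β
  rw [coeff_inclR]
  split_ifs with h
  · have : β = Finsupp.embDomain (Fin.succEmb n) (tailF n β) := by
      ext i
      refine Fin.cases ?_ (fun i => ?_) i
      · rw [h, Finsupp.embDomain_of_notMem_range]
        simp
      · have := Finsupp.embDomain_apply_self (Fin.succEmb n) (tailF n β) i
        simp only [Fin.coe_succEmb] at this
        rw [this]
        simp [tailF]
    conv_rhs => rw [this]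
    rw [coeff_embDomain_rename]
  · symm
    apply coeff_rename_eq_zero
    rintro ⟨x, rfl⟩
    apply h
    rw [Finsupp.mapDomain_of_notMem_range]
    simp

lemma inclR_mul {n : ℕ} (a b : R' n) : inclR n (a * b) = inclR n a * inclR n b := by
  simp [inclR_eq]

lemma inclR_sum {n : ℕ} {κ : Type*} (s : Finset κ) (a : κ → R' n) :
    inclR n (∑ i ∈ s, a i) = ∑ i ∈ s, inclR n (a i) := by
  simp [inclR_eq]

lemma pd_inclR {n : ℕ} (i : Fin n) (g : R' n) :
    pd i.succ (inclR n g) = inclR n (pd i g) := by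
  ext β
  rw [coeff_pd, coeff_inclR, coeff_inclR, coeff_pd]
  have h0 : (β + Finsupp.single i.succ 1 : Fin (n+1) →₀ ℕ) 0 = β 0 := by simp
  have h1 : tailF n (β + Finsupp.single i.succ 1) = tailF n β + Finsupp.single i 1 := by
    ext k
    simp [tailF, Finsupp.single_apply]
  rw [h0, h1]
  split_ifs
  · rfl
  · simp

lemma pd_mul {σ : Type*} (i : σ) (a b : MvPowerSeries σ ℂ) :
    pd i (a * b) = pd i a * b + a * pd i b := by
  simp only [pd_eq, Derivation.leibniz, smul_eq_mul]; ring

lemma pd_sub {σ : Type*} (i : σ) (a b : MvPowerSeries σ ℂ) :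
    pd i (a - b) = pd i a - pd i b := by
  simp only [pd_eq, map_sub]

lemma pd_comm {σ : Type*} (i j : σ) (a : MvPowerSeries σ ℂ) :
    pd i (pd j a) = pd j (pd i a) := by
  classical
  ext α
  simp only [coeff_pd, Finsupp.add_apply, Finsupp.single_apply]
  rw [add_right_comm]
  by_cases h : i = j
  · subst h; rfl
  · rw [if_neg h, if_neg (Ne.symm h)]; push_cast; ring

lemma pd_sv {n : ℕ} (i : Fin n) : pd i.succ (sv n) = 0 := by
  rw [pd_eq, sv, pderiv_X_of_ne]
  exact (Fin.succ_ne_zero i).symm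

lemma pd_sv_mul {n : ℕ} (i : Fin n) (a : A' n) : pd i.succ (sv n * a) = sv n * pd i.succ a := by
  rw [pd_mul, pd_sv]; ring

lemma FF_sv_mul {n : ℕ} (f : R' n) (i : Fin n) (a : A' n) :
    FF n f i (sv n * a) = sv n * FF n f i a := by
  simp only [FF, pd_sv_mul]; ring

lemma FF_sum {n : ℕ} (f : R' n) (i : Fin n) {κ : Type*} (s : Finset κ) (a : κ → A' n) :
    FF n f i (∑ k ∈ s, a k) = ∑ k ∈ s, FF n f i (a k) := by
  classical
  induction s using Finset.induction_on with
  | empty => simp [FF_zero]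
  | insert k s hk ih => rw [Finset.sum_insert hk, Finset.sum_insert hk, FF_add, ih]

lemma FF_neg {n : ℕ} (f : R' n) (i : Fin n) (a : A' n) : FF n f i (-a) = - FF n f i a := by
  have := FF_smul n f i (-1) a
  simpa using this

lemma FF_comm {n : ℕ} (f : R' n) (i j : Fin n) (a : A' n) :
    FF n f i (FF n f j a) = FF n f j (FF n f i a) := by
  simp only [FF, pd_sub, pd_mul, pd_sv, pd_inclR]
  rw [pd_comm i j f, pd_comm i.succ j.succ a]
  ring

/-- Ideal generated by `X_i ^ m`, `i < j`, described by coefficients. -/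
def coefIdeal (n m j : ℕ) : Ideal (R' n) where
  carrier := {u | ∀ α : Fin n →₀ ℕ, (∀ i : Fin n, (i : ℕ) < j → α i < m) → coeff α u = 0}
  zero_mem' := by intro α _; simp
  add_mem' := by intro a b ha hb α h; simp [ha α h, hb α h]
  smul_mem' := by
    classical
    intro c u hu α h
    rw [smul_eq_mul, coeff_mul]
    refine Finset.sum_eq_zero fun p hp => ?_
    rw [hu p.2 fun i hi => ?_, mul_zero]
    rw [Finset.HasAntidiagonal.mem_antidiagonal] at hp
    have := h i hi
    rw [← hp, Finsupp.add_apply] at this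
    omega

lemma mem_coefIdeal {n m j : ℕ} {u : R' n} : u ∈ coefIdeal n m j ↔
    ∀ α : Fin n →₀ ℕ, (∀ i : Fin n, (i : ℕ) < j → α i < m) → coeff α u = 0 := Iff.rfl

lemma coefIdeal_zero (n m : ℕ) : coefIdeal n m 0 = ⊥ := by
  rw [eq_bot_iff]
  intro u hu
  rw [Submodule.mem_bot]
  ext α
  exact hu α (by simp)

lemma coefIdeal_succ (n m : ℕ) (j : Fin n) :
    coefIdeal n m (j+1) = coefIdeal n m j ⊔ Ideal.span {(X j : R' n) ^ m} := by
  apply le_antisymm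
  · intro u hu
    let v : R' n := fun α => coeff (Finsupp.single j m + α) u
    have hv : ∀ α, coeff α v = coeff (Finsupp.single j m + α) u := fun _ => rfl
    rw [Submodule.mem_sup]
    refine ⟨u - X j ^ m * v, ?_, X j ^ m * v, Ideal.mul_mem_right _ _
      (Ideal.mem_span_singleton_self _), by ring⟩
    intro α h
    rw [map_sub, X_pow_eq, coeff_monomial_mul]
    by_cases hj : m ≤ α j
    · have hle : Finsupp.single j m ≤ α := by rw [Finsupp.single_le_iff]; exact hj
      rw [if_pos hle, hv, add_tsub_cancel_of_le hle]
      simp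
    · rw [if_neg (by rw [Finsupp.single_le_iff]; exact hj), sub_zero]
      apply hu
      intro i hi
      by_cases hij : i = j
      · subst hij; omega
      · exact h i (by have : (i : ℕ) ≠ j := fun h => hij (Fin.ext h)
                      omega)
  · apply sup_le
    · intro u hu α h
      exact hu α fun i hi => h i (by omega)
    · rw [Ideal.span_singleton_le_iff_mem]
      intro α h
      have h2 := h j (by omega)
      rw [X_pow_eq, coeff_monomial, if_neg]
      rintro rfl
      simp at h2

lemma coefIdeal_reg (n m : ℕ) (j : Fin n) (w : R' n) (h : X j ^ m * w ∈ coefIdeal n m j) :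
    w ∈ coefIdeal n m j := by
  intro α hα
  have := h (Finsupp.single j m + α) (by
    intro i hi
    have hij : j ≠ i := by rintro rfl; omega
    simpa [Finsupp.single_apply, hij] using hα i hi)
  rwa [X_pow_eq, coeff_add_monomial_mul, one_mul] at this

end BK

namespace BK
open MvPowerSeries

lemma syz (n : ℕ) (f : R' n) (m : ℕ) (hiso : mx n ^ m ≤ Jf n f) (q : Fin n → R' n)
    (hq : ∑ j, q j * pd j f = 0) :
    ∃ a : Fin n → Fin n → R' n, (∀ i j, a i j = - a j i) ∧
      ∀ i, q i = ∑ j, a i j * pd j f := by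
  refine koszul_syzygy (fun j => pd j f) (coefIdeal n m)
    (fun j => if h : j < n then (X (⟨j, h⟩ : Fin n) : R' n) ^ m else 0)
    (coefIdeal_zero n m) ?_ ?_ ?_ q hq
  · intro j hj
    simpa [hj] using coefIdeal_succ n m ⟨j, hj⟩
  · intro j hj w hw
    simp only [hj, dif_pos] at hw
    exact coefIdeal_reg n m ⟨j, hj⟩ w hw
  · intro j hj
    simp only [hj, dif_pos]
    exact hiso (Ideal.pow_mem_pow (Ideal.subset_span (Set.mem_range_self (⟨j, hj⟩ : Fin n))) m)

lemma sv_dvd_of {n : ℕ} (a : A' n) (h : ∀ β, β 0 = 0 → coeff β a = 0) : ∃ r, a = sv n * r :=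
  X_dvd_iff.2 h

lemma coeff_sv_mul {n : ℕ} (a : A' n) (β : Fin (n+1) →₀ ℕ) (h : β 0 = 0) :
    coeff β (sv n * a) = 0 :=
  X_dvd_iff.1 (Dvd.intro a rfl) β h

/-- Reduction mod `s`. -/
def red {n : ℕ} (a : A' n) : R' n := fun α => coeff (Finsupp.cons 0 α) a

lemma exists_red {n : ℕ} (a : A' n) : ∃ r, a = inclR n (red a) + sv n * r := by
  obtain ⟨r, hr⟩ := sv_dvd_of (a - inclR n (red a)) (by
    intro β hβ
    rw [map_sub, coeff_inclR, if_pos hβ]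
    change coeff β a - coeff (Finsupp.cons 0 (tailF n β)) a = 0
    rw [← tailF_eq β hβ, sub_self])
  exact ⟨r, by rw [← hr]; ring⟩

lemma main (n : ℕ) (f : R' n) (m : ℕ) (hiso : mx n ^ m ≤ Jf n f) (p : A' n)
    (hp : sv n * p ∈ Mset n f) : p ∈ Mset n f := by
  obtain ⟨q, hq⟩ := hp
  choose r hr using fun i => exists_red (q i)
  have h1 : inclR n (∑ j, red (q j) * pd j f) =
      sv n * (p + ∑ j, (pd j.succ (q j) - inclR n (pd j f) * r j)) := by
    rw [mul_add, hq, Finset.mul_sum, ← Finset.sum_add_distrib, inclR_sum]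
    refine Finset.sum_congr rfl fun j _ => ?_
    rw [inclR_mul, FF]
    have := hr j
    linear_combination (-inclR n (pd j f)) * this
  have h2 : ∑ j, red (q j) * pd j f = 0 := by
    ext α
    rw [← coeff_cons, h1, coeff_sv_mul _ _ (Finsupp.cons_zero _ _)]
    simp
  obtain ⟨a, ha, haq⟩ := syz n f m hiso _ h2
  let t : Fin n → A' n := fun i => r i + ∑ j, pd j.succ (inclR n (a i j))
  have h3 : ∀ i, q i = ∑ j, FF n f j (inclR n (a i j)) + sv n * t i := by
    intro i
    rw [hr i, haq i, inclR_sum]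
    simp only [FF, inclR_mul, t, mul_add, Finset.sum_sub_distrib, Finset.mul_sum]
    simp only [mul_comm (inclR n (a i _))]
    ring
  have h4 : ∑ i, ∑ j, FF n f i (FF n f j (inclR n (a i j))) = 0 := by
    have h5 : ∑ i, ∑ j, FF n f i (FF n f j (inclR n (a i j))) =
        - ∑ i, ∑ j, FF n f i (FF n f j (inclR n (a i j))) := by
      conv_lhs => rw [Finset.sum_comm]
      rw [← Finset.sum_neg_distrib]
      refine Finset.sum_congr rfl fun i _ => ?_
      rw [← Finset.sum_neg_distrib]
      refine Finset.sum_congr rfl fun j _ => ?_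
      rw [ha j i, FF_comm, ← FF_neg, ← FF_neg]
      congr 2
      simp [inclR_eq]
    generalize (∑ i, ∑ j, FF n f i (FF n f j (inclR n (a i j))) : A' n) = w at h5
    ext β
    have h7 := congrArg (coeff β) h5
    rw [map_neg] at h7
    rw [map_zero]
    exact self_eq_neg.1 h7
  refine ⟨t, ?_⟩
  have hs : sv n ≠ 0 := by
    intro h
    have h8 := congrArg (coeff (Finsupp.single (0 : Fin (n+1)) 1)) h
    simp [sv] at h8
  apply mul_left_cancel₀ hs
  rw [hq, Finset.mul_sum]
  have h6 : ∀ i, FF n f i (q i) =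
      ∑ j, FF n f i (FF n f j (inclR n (a i j))) + sv n * FF n f i (t i) := by
    intro i
    conv_lhs => rw [h3 i]
    rw [FF_add, FF_sum, FF_sv_mul]
  rw [Finset.sum_congr rfl fun i _ => h6 i, Finset.sum_add_distrib, h4, zero_add]

end BK

/-- **Multiplication by `s` is injective on the formal Brieskorn lattice**:
if `s·p ∈ M` then `p ∈ M`; i.e. the endomorphism of `H = A/M` induced by
multiplication with `s` is injective. -/
theorem brieskorn_s_injective (n : ℕ) (hn : 1 ≤ n) (f : R' n)
    (hf0 : MvPowerSeries.constantCoeff f = 0)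
    (m : ℕ) (hm : 1 ≤ m) (hiso : mx n ^ m ≤ Jf n f) :
    ∀ p : A' n, sv n * p ∈ Mset n f → p ∈ Mset n f := by
  exact BK.main n f m hiso
end
end

section
/- Second inclusion in the proof of Proposition 3 (formal version): for every k ≥ 1, s^k·A ⊆ ⟨x₁,…,xₙ⟩^k·A + M, where ⟨x₁,…,xₙ⟩·A denotes the ideal of A generated by the variables x₁,…,xₙ (not including s). Equivalently, s^k·H is contained in the image in H = A/M of the ideal ⟨x₁,…,xₙ⟩^k·A. -/
noncomputable section

open scoped Pointwise

variable (n : ℕ)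

/-- Formal integration in the `i`th variable. -/
def integ {σ : Type*} (i : σ) (g : MvPowerSeries σ ℂ) : MvPowerSeries σ ℂ :=
  fun α => if α i = 0 then 0 else
    MvPowerSeries.coeff (α - Finsupp.single i 1) g / (α i : ℂ)

lemma coeff_integ {σ : Type*} (i : σ) (g : MvPowerSeries σ ℂ) (α : σ →₀ ℕ) :
    MvPowerSeries.coeff α (integ i g) = if α i = 0 then 0 else
      MvPowerSeries.coeff (α - Finsupp.single i 1) g / (α i : ℂ) := rfl

lemma pd_integ {σ : Type*} (i : σ) (g : MvPowerSeries σ ℂ) : pd i (integ i g) = g := by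
  ext α
  have h : ((α i : ℂ) + 1) ≠ 0 := by exact_mod_cast Nat.succ_ne_zero (α i)
  rw [coeff_pd, coeff_integ]
  simp only [Finsupp.add_apply, Finsupp.single_eq_same, Nat.succ_ne_zero, if_false,
    add_tsub_cancel_right, Nat.cast_add, Nat.cast_one]
  field_simp

lemma dvd_integ {σ : Type*} (i : σ) (k : ℕ) (g : MvPowerSeries σ ℂ)
    (h : (MvPowerSeries.X i : MvPowerSeries σ ℂ) ^ k ∣ g) :
    (MvPowerSeries.X i : MvPowerSeries σ ℂ) ^ (k + 1) ∣ integ i g := by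
  rw [MvPowerSeries.X_pow_dvd_iff] at h ⊢
  intro α hα
  rw [coeff_integ]
  split_ifs with h0
  · rfl
  · rw [h, zero_div]
    simp only [Finsupp.tsub_apply, Finsupp.single_eq_same]
    omega

lemma pd_X_mul {σ : Type*} (i j : σ) (hij : j ≠ i) (g : MvPowerSeries σ ℂ) :
    pd i (MvPowerSeries.X j * g) = MvPowerSeries.X j * pd i g := by
  classical
  ext α
  have hs : Finsupp.single i 1 j = 0 := Finsupp.single_eq_of_ne hij
  have hs' : Finsupp.single j 1 i = 0 := Finsupp.single_eq_of_ne hij.symm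
  rw [coeff_pd, MvPowerSeries.X, MvPowerSeries.coeff_monomial_mul,
    MvPowerSeries.coeff_monomial_mul]
  simp only [Finsupp.single_le_iff, Finsupp.add_apply, hs, add_zero, one_mul]
  split_ifs with h
  · rw [coeff_pd]
    have e : α + Finsupp.single i 1 - Finsupp.single j 1
        = α - Finsupp.single j 1 + Finsupp.single i 1 :=
      tsub_add_eq_add_tsub (Finsupp.single_le_iff.2 h) |>.symm
    rw [e, Finsupp.tsub_apply, hs', Nat.sub_zero]
  · simp

lemma sv_mul_FF (n : ℕ) (f : R' n) (i : Fin n) (g : A' n) :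
    sv n * FF n f i g = FF n f i (sv n * g) := by
  have h : pd i.succ (sv n * g) = sv n * pd i.succ g :=
    pd_X_mul _ _ (Fin.succ_ne_zero i).symm g
  rw [FF, FF, h]
  ring

lemma key (n : ℕ) (f : R' n) (i : Fin n) (a : A' n) (k : ℕ) :
    ∃ b, (MvPowerSeries.X i.succ : A' n) ^ k ∣ b ∧ ∃ c ∈ Msub n f, b + c = sv n ^ k * a := by
  induction k with
  | zero => exact ⟨a, by simp, 0, Submodule.zero_mem _, by simp⟩
  | succ k ih =>
    obtain ⟨b, hb, c, ⟨q, hq⟩, h⟩ := ih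
    refine ⟨inclR n (pd i f) * integ i.succ b, (dvd_integ _ _ _ hb).mul_left _,
      sv n * c - FF n f i (integ i.succ b), ?_, ?_⟩
    · refine Submodule.sub_mem _ ⟨fun j => sv n * q j, ?_⟩ ⟨Pi.single i (integ i.succ b), ?_⟩
      · rw [hq, Finset.mul_sum]
        exact Finset.sum_congr rfl fun j _ => sv_mul_FF n f j (q j)
      · rw [Finset.sum_eq_single i]
        · simp
        · intro j _ hj
          rw [Pi.single_eq_of_ne hj, FF_zero]
        · simp
    · rw [FF, pd_integ, pow_succ', mul_assoc, ← h]
      ring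

/-- **Second inclusion in the proof of Proposition 3 (formal version)**: for every
`k ≥ 1`, `s^k·A ⊆ ⟨x₁,…,xₙ⟩^k·A + M`. -/
theorem brieskorn_second_inclusion (n : ℕ) (hn : 1 ≤ n) (f : R' n)
    (hf0 : MvPowerSeries.constantCoeff f = 0)
    (m : ℕ) (hm : 1 ≤ m) (hiso : mx n ^ m ≤ Jf n f) :
    ∀ k : ℕ, 1 ≤ k →
      ((Ideal.span {sv n ^ k} : Ideal (A' n)) : Set (A' n)) ⊆
        ((XA n ^ k : Ideal (A' n)) : Set (A' n)) + Mset n f := by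
  intro k _ x hx
  obtain ⟨a, rfl⟩ := Ideal.mem_span_singleton.1 hx
  obtain ⟨b, hb, c, hc, h⟩ := key n f ⟨0, hn⟩ a k
  refine Set.mem_add.2 ⟨b, ?_, c, hc, h⟩
  have hX : (MvPowerSeries.X (Fin.succ ⟨0, hn⟩) : A' n) ∈ XA n :=
    Ideal.subset_span (Set.mem_range_self (⟨0, hn⟩ : Fin n))
  exact Ideal.mem_of_dvd _ hb (Ideal.pow_mem_pow hX k)
end
end

section
/- The special fibre of the formal Brieskorn lattice is the Milnor algebra: M + s·A = J(f)·A + s·A (where J(f)·A is the ideal of A generated by ∂₁(f),…,∂ₙ(f) and s·A the ideal generated by s), and the inclusion R ⊆ A induces a ℂ-linear isomorphism R/J(f) ≅ A/(M + s·A) = H/sH; in particular dim_ℂ (H/sH) = μ, the Milnor number of f. -/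
noncomputable section

open scoped Pointwise

variable (n : ℕ)

/-- Setting `s = 0` on underlying series. -/
def resFun (n : ℕ) (g : A' n) : R' n :=
  fun α => MvPowerSeries.coeff (Finsupp.cons 0 α) g

/-- Setting `s = 0`: the ring homomorphism `A → R`. -/
def resR (n : ℕ) : A' n →+* R' n where
  toFun := resFun n
  map_one' := by
    classical
    ext α
    change MvPowerSeries.coeff (Finsupp.cons 0 α) (1 : A' n) = _
    rw [MvPowerSeries.coeff_one, MvPowerSeries.coeff_one]
    have : (Finsupp.cons 0 α : Fin (n+1) →₀ ℕ) = 0 ↔ α = 0 := by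
      constructor
      · intro h
        have := congrArg Finsupp.tail h
        rw [Finsupp.tail_cons] at this
        rw [this]; ext i; simp [Finsupp.tail_apply]
      · rintro rfl; exact Finsupp.cons_zero_zero
    simp only [this]
  map_zero' := by ext α; rfl
  map_add' a b := by ext α; rfl
  map_mul' a b := by
    classical
    ext α
    change MvPowerSeries.coeff (Finsupp.cons 0 α) (a * b) = _
    rw [MvPowerSeries.coeff_mul, MvPowerSeries.coeff_mul]
    have key : ∀ p : (Fin (n+1) →₀ ℕ) × (Fin (n+1) →₀ ℕ),
        p ∈ Finset.HasAntidiagonal.antidiagonal (Finsupp.cons 0 α) →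
        Finsupp.cons 0 p.1.tail = p.1 ∧ Finsupp.cons 0 p.2.tail = p.2 := by
      intro p hp
      rw [Finset.HasAntidiagonal.mem_antidiagonal] at hp
      have h0 := DFunLike.congr_fun hp 0
      simp only [Finsupp.add_apply, Finsupp.cons_zero] at h0
      have h1 : p.1 0 = 0 := by omega
      have h2 : p.2 0 = 0 := by omega
      constructor
      · rw [← h1]; exact Finsupp.cons_tail _
      · rw [← h2]; exact Finsupp.cons_tail _
    refine Finset.sum_nbij' (fun p => (p.1.tail, p.2.tail))
      (fun p => (Finsupp.cons 0 p.1, Finsupp.cons 0 p.2)) ?_ ?_ ?_ ?_ ?_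
    · intro p hp
      rw [Finset.HasAntidiagonal.mem_antidiagonal] at hp ⊢
      ext i
      have := DFunLike.congr_fun hp i.succ
      simpa [Finsupp.tail_apply] using this
    · intro p hp
      rw [Finset.HasAntidiagonal.mem_antidiagonal] at hp ⊢
      subst hp
      ext i
      refine Fin.cases ?_ (fun j => ?_) i <;> simp
    · intro p hp
      exact Prod.ext (key p hp).1 (key p hp).2
    · intro p hp
      simp
    · intro p hp
      change _ = MvPowerSeries.coeff (Finsupp.cons 0 p.1.tail) a *
        MvPowerSeries.coeff (Finsupp.cons 0 p.2.tail) b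
      rw [(key p hp).1, (key p hp).2]

lemma coeff_resR (n : ℕ) (g : A' n) (α : Fin n →₀ ℕ) :
    MvPowerSeries.coeff α (resR n g) = MvPowerSeries.coeff (Finsupp.cons 0 α) g := rfl

lemma resR_inclR (n : ℕ) (g : R' n) : resR n (inclR n g) = g := by
  ext α
  rw [coeff_resR, coeff_inclR, Finsupp.cons_zero, if_pos rfl]
  congr 2
  ext i
  simp [tailF]

lemma resR_eq_zero_iff (n : ℕ) (a : A' n) :
    a ∈ Ideal.span {sv n} ↔ resR n a = 0 := by
  rw [Ideal.mem_span_singleton, sv, MvPowerSeries.X_dvd_iff]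
  constructor
  · intro h
    ext α
    rw [coeff_resR, h _ (Finsupp.cons_zero _ _)]; simp
  · intro h β hβ
    have := congrArg (MvPowerSeries.coeff β.tail) h
    rw [coeff_resR, ← hβ, Finsupp.cons_tail] at this
    simpa using this

lemma resR_sv (n : ℕ) : resR n (sv n) = 0 :=
  (resR_eq_zero_iff n _).1 (Ideal.mem_span_singleton_self _)

lemma resR_FF (n : ℕ) (f : R' n) (i : Fin n) (g : A' n) :
    resR n (FF n f i g) = pd i f * resR n g := by
  simp [FF, resR_inclR, resR_sv]

lemma exists_of_mem_Jf (n : ℕ) (f g : R' n) (h : g ∈ Jf n f) :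
    ∃ c : Fin n → R' n, ∑ i, c i * pd i f = g := by
  simpa using (Submodule.mem_span_range_iff_exists_fun (R' n)).1 h

lemma mem_fibre_iff (n : ℕ) (f : R' n) (a : A' n) :
    a ∈ Msub n f ⊔ (Ideal.span {sv n}).restrictScalars ℂ ↔ resR n a ∈ Jf n f := by
  constructor
  · intro h
    obtain ⟨y, ⟨q, rfl⟩, z, hz, rfl⟩ := Submodule.mem_sup.1 h
    have hz' : resR n z = 0 := (resR_eq_zero_iff n z).1 hz
    rw [map_add, hz', add_zero, map_sum]
    refine Ideal.sum_mem _ fun i _ => ?_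
    rw [resR_FF]
    exact Ideal.mul_mem_right _ _ (Ideal.subset_span ⟨i, rfl⟩)
  · intro h
    obtain ⟨c, hc⟩ := exists_of_mem_Jf n f _ h
    refine Submodule.mem_sup.2 ⟨∑ i, FF n f i (inclR n (c i)), ⟨_, rfl⟩,
      a - ∑ i, FF n f i (inclR n (c i)), ?_, by ring⟩
    refine (resR_eq_zero_iff n _).2 ?_
    rw [map_sub, map_sum, ← hc, sub_eq_zero]
    exact Finset.sum_congr rfl fun i _ => by rw [resR_FF, resR_inclR, mul_comm]

lemma mem_JA_iff (n : ℕ) (f : R' n) (a : A' n) :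
    a ∈ (JA n f).restrictScalars ℂ ⊔ (Ideal.span {sv n}).restrictScalars ℂ ↔
      resR n a ∈ Jf n f := by
  constructor
  · intro h
    obtain ⟨y, hy, z, hz, rfl⟩ := Submodule.mem_sup.1 h
    have hz' : resR n z = 0 := (resR_eq_zero_iff n z).1 hz
    rw [map_add, hz', add_zero]
    have : JA n f ≤ (Jf n f).comap (resR n) := by
      refine Ideal.span_le.2 ?_
      rintro _ ⟨i, rfl⟩
      change resR n (inclR n (pd i f)) ∈ Jf n f
      rw [resR_inclR]
      exact Ideal.subset_span ⟨i, rfl⟩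
    exact this hy
  · intro h
    obtain ⟨c, hc⟩ := exists_of_mem_Jf n f _ h
    refine Submodule.mem_sup.2 ⟨∑ i, inclR n (c i) * inclR n (pd i f), ?_,
      a - ∑ i, inclR n (c i) * inclR n (pd i f), ?_, by ring⟩
    · change _ ∈ JA n f
      exact Ideal.sum_mem _ fun i _ => Ideal.mul_mem_left _ _ (Ideal.subset_span ⟨i, rfl⟩)
    refine (resR_eq_zero_iff n _).2 ?_
    rw [map_sub, map_sum, ← hc, sub_eq_zero]
    exact Finset.sum_congr rfl fun i _ => by rw [map_mul, resR_inclR, resR_inclR]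

/-- **The special fibre of the formal Brieskorn lattice is the Milnor algebra**:
`M + s·A = J(f)·A + s·A`, and the inclusion `R ⊆ A` induces a `ℂ`-linear
isomorphism `R/J(f) ≅ A/(M + s·A) = H/sH` (the composite `R → A → A/(M + s·A)` is
surjective with kernel `J(f)`); in particular `dim_ℂ (H/sH) = μ`, the Milnor
number of `f`. -/
theorem brieskorn_special_fibre (n : ℕ) (hn : 1 ≤ n) (f : R' n)
    (hf0 : MvPowerSeries.constantCoeff f = 0)
    (m : ℕ) (hm : 1 ≤ m) (hiso : mx n ^ m ≤ Jf n f) :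
    Msub n f ⊔ (Ideal.span {sv n}).restrictScalars ℂ =
      (JA n f).restrictScalars ℂ ⊔ (Ideal.span {sv n}).restrictScalars ℂ ∧
    Function.Surjective
      ((Msub n f ⊔ (Ideal.span {sv n}).restrictScalars ℂ).mkQ ∘ₗ inclL n) ∧
    LinearMap.ker ((Msub n f ⊔ (Ideal.span {sv n}).restrictScalars ℂ).mkQ ∘ₗ inclL n) =
      (Jf n f).restrictScalars ℂ ∧
    Module.finrank ℂ (A' n ⧸ (Msub n f ⊔ (Ideal.span {sv n}).restrictScalars ℂ)) =
      Module.finrank ℂ (R' n ⧸ Jf n f) := by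
  have hsurj : Function.Surjective
      ((Msub n f ⊔ (Ideal.span {sv n}).restrictScalars ℂ).mkQ ∘ₗ inclL n) := by
    intro x
    obtain ⟨a, rfl⟩ := Submodule.mkQ_surjective _ x
    refine ⟨resR n a, ?_⟩
    rw [LinearMap.comp_apply, ← sub_eq_zero, ← map_sub, Submodule.mkQ_apply,
      Submodule.Quotient.mk_eq_zero, mem_fibre_iff, map_sub]
    change resR n (inclR n (resR n a)) - _ ∈ _
    rw [resR_inclR, sub_self]
    exact zero_mem _
  have hker : LinearMap.ker
      ((Msub n f ⊔ (Ideal.span {sv n}).restrictScalars ℂ).mkQ ∘ₗ inclL n) =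
      (Jf n f).restrictScalars ℂ := by
    ext g
    rw [LinearMap.mem_ker, LinearMap.comp_apply, Submodule.mkQ_apply,
      Submodule.Quotient.mk_eq_zero, mem_fibre_iff]
    change resR n (inclR n g) ∈ _ ↔ g ∈ Jf n f
    rw [resR_inclR]
  refine ⟨?_, hsurj, hker, ?_⟩
  · ext a
    rw [mem_fibre_iff, mem_JA_iff]
  · have e1 := (LinearMap.quotKerEquivOfSurjective _ hsurj).finrank_eq
    have e2 := (Submodule.quotEquivOfEq _ _ hker).finrank_eq
    have e3 := (Submodule.Quotient.restrictScalarsEquiv ℂ (Jf n f)).finrank_eq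
    exact e1.symm.trans (e2.trans e3)
end
end
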